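/- Let d ≥ 1 and ε > 0, and let ν : ℤ^d → [0,∞) be a bounded function satisfying the balance equation with parameter ε and with ν_0 > 0. Then for every x ∈ ℤ^d with x ≠ 0, ν_x = ν_0 · E_x[ 1{τ_0 < ∞} · (1 + ε ν_0)^{−τ_0} ], where τ_0 is the first hitting time of 0 by the simple random walk started at x. -/

import Mathlib

open Finset

namespace CBRW

/-- The `i`-th canonical basis vector of `ℤ^d`. -/
def e (d : ℕ) (i : Fin d) : Fin d → ℤ := Pi.single i 1

/-- The step of the simple random walk corresponding to the direction `(i, b)`:
`+e_i` if `b = true`, `-e_i` if `b = false`. -/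
def dir (d : ℕ) (s : Fin d × Bool) : Fin d → ℤ := if s.2 then e d s.1 else -(e d s.1)

/-- The position at time `j` of the simple random walk started at `x` and driven by the
word of increments `w` (of length `k`); only the first `j` letters of `w` are used. -/
def posAt (d : ℕ) {k : ℕ} (x : Fin d → ℤ) (w : Fin k → Fin d × Bool) (j : ℕ) :
    Fin d → ℤ :=
  x + ∑ i : Fin k, if (i : ℕ) < j then dir d (w i) else 0

open Classical in
/-- `ℙ_x(τ_y = k)`: the probability that the simple random walk on `ℤ^d` started at `x`
first visits `y` at time `k` (meaningful for `k ≥ 1`). -/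
noncomputable def firstHitProb (d : ℕ) (x y : Fin d → ℤ) (k : ℕ) : ℝ :=
  ((Finset.univ.filter (fun w : Fin k → Fin d × Bool =>
      (∀ j, 1 ≤ j → j < k → posAt d x w j ≠ y) ∧ posAt d x w k = y)).card : ℝ) /
    (2 * (d : ℝ)) ^ k

open Classical in
/-- `ℙ_x(τ_y ≥ k + 1)`: the probability that the simple random walk on `ℤ^d` started at `x`
avoids `y` at all times `1, …, k`. -/
noncomputable def avoidProb (d : ℕ) (x y : Fin d → ℤ) (k : ℕ) : ℝ :=
  ((Finset.univ.filter (fun w : Fin k → Fin d × Bool =>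
      ∀ j, 1 ≤ j → j ≤ k → posAt d x w j ≠ y)).card : ℝ) / (2 * (d : ℝ)) ^ k

/-- `γ_d = ℙ_0(τ_0 = ∞)`: the probability that the simple random walk started at `0`
never returns to `0`. -/
noncomputable def gamma (d : ℕ) : ℝ := 1 - ∑' k : ℕ, firstHitProb d 0 0 (k + 1)

/-- `E_x[𝟙_{τ_y < ∞} (1 + u)^{-τ_y}]` for the simple random walk started at `x`. -/
noncomputable def hitGen (d : ℕ) (x y : Fin d → ℤ) (u : ℝ) : ℝ :=
  ∑' k : ℕ, firstHitProb d x y (k + 1) * ((1 + u) ^ (k + 1))⁻¹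

/-- `ν` satisfies the balance equation with parameter `ε`:
`(1 + ε ν 0) ν x = (1/(2d)) ∑ i (ν (x + e i) + ν (x - e i))` for all `x ≠ 0`. -/
def BalanceEq (d : ℕ) (ε : ℝ) (ν : (Fin d → ℤ) → ℝ) : Prop :=
  ∀ x : Fin d → ℤ, x ≠ 0 →
    (1 + ε * ν 0) * ν x =
      (1 / (2 * (d : ℝ))) * ∑ i : Fin d, (ν (x + e d i) + ν (x - e d i))

/-- `ν` is a probability measure on `ℤ^d`, identified with a nonnegative function
summing to `1`. -/
def IsProbMeasure (d : ℕ) (ν : (Fin d → ℤ) → ℝ) : Prop :=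
  (∀ x, 0 ≤ ν x) ∧ HasSum ν 1

end CBRW

/-!
Put `u = ε ν_0`. Let `h x = E_x[(1 + u)^{-σ}]`, where `σ` is the first time `n ≥ 0` at which the
walk is at `0`; unlike `τ_0`, it counts the visit at time `0`. Then `h 0 = 1`, and `h` agrees with
the generating function of `τ_0` away from `0`. Conditioning on the first step shows that
`(1 + u) h = A h` away from `0`, where `A` is the averaging operator of the walk. The function `ν`
solves the same equation, so `g = ν - ν_0 h` is bounded, vanishes at `0` and satisfies
`(1 + u) g = A g` elsewhere. Since `A` does not increase the sup norm and `1 + u > 1`, `g = 0`.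
-/

namespace CBRW

section StepAvg

variable {E : Type*} {d : ℕ}

/-- The averaging (Markov) operator of the simple random walk, `(A f)(x) = E_x[f(S_1)]`. -/
noncomputable def stepAvg [AddCommMonoid E] [Module ℝ E] (d : ℕ) (f : (Fin d → ℤ) → E)
    (x : Fin d → ℤ) : E :=
  (2 * (d : ℝ))⁻¹ • ∑ s : Fin d × Bool, f (x + dir d s)

lemma stepAvg_eq_sum_basis [AddCommMonoid E] [Module ℝ E] (f : (Fin d → ℤ) → E)
    (x : Fin d → ℤ) :
    stepAvg d f x = (2 * (d : ℝ))⁻¹ • ∑ i : Fin d, (f (x + e d i) + f (x - e d i)) := by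
  simp [stepAvg, Fintype.sum_prod_type, dir, sub_eq_add_neg]

lemma balanceEq_iff_stepAvg {ε : ℝ} {ν : (Fin d → ℤ) → ℝ} :
    BalanceEq d ε ν ↔ ∀ x ≠ 0, (1 + ε * ν 0) • ν x = stepAvg d ν x := by
  simp only [BalanceEq, stepAvg_eq_sum_basis, smul_eq_mul, one_div]

lemma stepAvg_sub [AddCommGroup E] [Module ℝ E] (f g : (Fin d → ℤ) → E) (x : Fin d → ℤ) :
    stepAvg d (f - g) x = stepAvg d f x - stepAvg d g x := by
  simp only [stepAvg, Pi.sub_apply, sum_sub_distrib, smul_sub]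

lemma stepAvg_smul_const [AddCommMonoid E] [Module ℝ E] (φ : (Fin d → ℤ) → ℝ) (v : E)
    (x : Fin d → ℤ) :
    stepAvg d (fun z => φ z • v) x = stepAvg d φ x • v := by
  simp only [stepAvg, ← sum_smul, smul_assoc]

lemma hasSum_stepAvg [AddCommMonoid E] [Module ℝ E] [TopologicalSpace E] [ContinuousAdd E]
    [ContinuousConstSMul ℝ E] {ι : Type*} {F : ι → (Fin d → ℤ) → E} {f : (Fin d → ℤ) → E}
    (hF : ∀ z, HasSum (fun i => F i z) (f z)) (x : Fin d → ℤ) :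
    HasSum (fun i => stepAvg d (F i) x) (stepAvg d f x) :=
  (hasSum_sum fun s _ => hF (x + dir d s)).const_smul _

lemma norm_stepAvg_le [SeminormedAddCommGroup E] [NormedSpace ℝ E] {f : (Fin d → ℤ) → E}
    {C : ℝ} (hf : ∀ z, ‖f z‖ ≤ C) (x : Fin d → ℤ) : ‖stepAvg d f x‖ ≤ C := by
  have hC : 0 ≤ C := (norm_nonneg (f x)).trans (hf x)
  have hsum : ‖∑ s : Fin d × Bool, f (x + dir d s)‖ ≤ 2 * d * C :=
    (norm_sum_le_of_le _ fun s _ => hf (x + dir d s)).trans_eq (by simp [mul_comm])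
  calc ‖stepAvg d f x‖ = (2 * (d : ℝ))⁻¹ * ‖∑ s : Fin d × Bool, f (x + dir d s)‖ := by
        rw [stepAvg, norm_smul, Real.norm_of_nonneg (by positivity)]
    _ ≤ (2 * (d : ℝ))⁻¹ * (2 * d * C) := by gcongr
    _ ≤ C := inv_mul_le_of_le_mul₀ (by positivity) hC le_rfl

lemma eq_zero_of_smul_eq_stepAvg [NormedAddCommGroup E] [NormedSpace ℝ E] {a : ℝ}
    (ha : 1 < |a|) {g : (Fin d → ℤ) → E} (hbdd : ∃ B, ∀ x, ‖g x‖ ≤ B) {K : Set (Fin d → ℤ)}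
    (hK : ∀ x ∈ K, g x = 0) (hg : ∀ x ∉ K, a • g x = stepAvg d g x) : g = 0 := by
  obtain ⟨B, hB⟩ := hbdd
  have ha0 : 0 < |a| := one_pos.trans ha
  set M : ℝ := ⨆ x, ‖g x‖
  have hgM : ∀ x, ‖g x‖ ≤ M := le_ciSup ⟨B, Set.forall_mem_range.2 hB⟩
  have hM : 0 ≤ M := (norm_nonneg (g 0)).trans (hgM 0)
  have hcontr : ∀ x, ‖g x‖ ≤ M / |a| := fun x => by
    by_cases hx : x ∈ K
    · rw [hK x hx, norm_zero]
      positivity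
    · rw [le_div_iff₀' ha0, ← Real.norm_eq_abs, ← norm_smul, hg x hx]
      exact norm_stepAvg_le hgM x
  have hMa : M * |a| ≤ M := (le_div_iff₀ ha0).1 (ciSup_le hcontr)
  have hM0 : M ≤ 0 := by nlinarith
  exact funext fun x => norm_le_zero_iff.1 ((hgM x).trans hM0)

end StepAvg

section Path

variable {d k : ℕ}

lemma posAt_zero (x : Fin d → ℤ) (w : Fin k → Fin d × Bool) : posAt d x w 0 = x := by
  simp [posAt]

lemma posAt_cons_succ (x : Fin d → ℤ) (s : Fin d × Bool) (w : Fin k → Fin d × Bool) (j : ℕ) :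
    posAt d x (Fin.cons s w : Fin (k + 1) → Fin d × Bool) (j + 1)
      = posAt d (x + dir d s) w j := by
  simp [posAt, Fin.sum_univ_succ, add_assoc]

lemma card_filter_eq_sum_card_filter_cons {α : Type*} [Fintype α]
    (P : (Fin (k + 1) → α) → Prop) [DecidablePred P] :
    #{w | P w} = ∑ s : α, #{w : Fin k → α | P (Fin.cons s w)} := by
  simp only [card_filter]
  rw [← (Fin.consEquiv fun _ : Fin (k + 1) => α).sum_comp, Fintype.sum_prod_type]
  rfl

end Path

section Entrance

variable {d : ℕ} {x y : Fin d → ℤ} {u : ℝ}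

open Classical in
/-- `ℙ_x(σ_y = k)` with `σ_y = inf {n ≥ 0 : S_n = y}`: unlike `τ_y`, the entrance time `σ_y`
vanishes when the walk starts at `y`. -/
noncomputable def entranceProb (d : ℕ) (x y : Fin d → ℤ) (k : ℕ) : ℝ :=
  #{w : Fin k → Fin d × Bool | (∀ j < k, posAt d x w j ≠ y) ∧ posAt d x w k = y} /
    (2 * (d : ℝ)) ^ k

/-- `E_x[𝟙_{σ_y < ∞} (1 + u)^{-σ_y}]`, the analogue of `hitGen` for the entrance time `σ_y`. -/
noncomputable def entranceGen (d : ℕ) (x y : Fin d → ℤ) (u : ℝ) : ℝ :=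
  ∑' k : ℕ, entranceProb d x y k * ((1 + u) ^ k)⁻¹

lemma entranceProb_nonneg (x y : Fin d → ℤ) (k : ℕ) : 0 ≤ entranceProb d x y k := by
  unfold entranceProb
  positivity

lemma entranceProb_le_one (x y : Fin d → ℤ) (k : ℕ) : entranceProb d x y k ≤ 1 := by
  classical
  refine div_le_one_of_le₀ ?_ (by positivity)
  calc _ ≤ (Fintype.card (Fin k → Fin d × Bool) : ℝ) := by exact_mod_cast card_le_univ _
    _ = (2 * (d : ℝ)) ^ k := by simp [mul_comm]

lemma entranceProb_self_zero (y : Fin d → ℤ) : entranceProb d y y 0 = 1 := by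
  simp [entranceProb, posAt_zero]

lemma entranceProb_self_of_ne_zero (y : Fin d → ℤ) {k : ℕ} (hk : k ≠ 0) :
    entranceProb d y y k = 0 := by
  have havoid (w : Fin k → Fin d × Bool) : ¬ ∀ j < k, posAt d y w j ≠ y :=
    fun h => h 0 hk.bot_lt (posAt_zero y w)
  simp [entranceProb, havoid]

lemma entranceProb_zero_of_ne (hxy : x ≠ y) : entranceProb d x y 0 = 0 := by
  simp [entranceProb, posAt_zero, hxy]

lemma entranceProb_eq_firstHitProb (hxy : x ≠ y) (k : ℕ) :
    entranceProb d x y k = firstHitProb d x y k := by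
  have havoid (w : Fin k → Fin d × Bool) :
      (∀ j < k, posAt d x w j ≠ y) ↔ ∀ j, 1 ≤ j → j < k → posAt d x w j ≠ y := by
    refine ⟨fun h j _ => h j, fun h j hj => ?_⟩
    rcases j.eq_zero_or_pos with rfl | hj0
    · rwa [posAt_zero]
    · exact h j hj0 hj
  simp only [entranceProb, firstHitProb, havoid]
  congr!

lemma firstHitProb_succ (x y : Fin d → ℤ) (k : ℕ) :
    firstHitProb d x y (k + 1) = stepAvg d (fun z => entranceProb d z y k) x := by
  have hshift (s : Fin d × Bool) (w : Fin k → Fin d × Bool) :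
      (∀ j, 1 ≤ j → j < k + 1 →
        posAt d x (Fin.cons s w : Fin (k + 1) → Fin d × Bool) j ≠ y) ↔
      ∀ j < k, posAt d (x + dir d s) w j ≠ y := by
    simp only [← posAt_cons_succ]
    refine ⟨fun h j hj => h (j + 1) (by omega) (by omega), fun h j hj hjk => ?_⟩
    obtain ⟨i, rfl⟩ := Nat.exists_eq_add_of_le' hj
    exact h i (by omega)
  simp only [firstHitProb, stepAvg, entranceProb, card_filter_eq_sum_card_filter_cons, hshift,
    posAt_cons_succ, Nat.cast_sum, smul_eq_mul, ← sum_div]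
  rw [pow_succ, div_mul_eq_div_div, div_eq_inv_mul _ (2 * (d : ℝ))]

lemma norm_entranceGen_term_le (x y : Fin d → ℤ) (u : ℝ) (k : ℕ) :
    ‖entranceProb d x y k * ((1 + u) ^ k)⁻¹‖ ≤ |1 + u|⁻¹ ^ k := by
  rw [norm_mul, norm_inv, norm_pow, Real.norm_eq_abs (1 + u), ← inv_pow,
    Real.norm_of_nonneg (entranceProb_nonneg x y k)]
  exact mul_le_of_le_one_left (by positivity) (entranceProb_le_one x y k)

lemma hasSum_entranceGen (hu : 1 < |1 + u|) (x y : Fin d → ℤ) :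
    HasSum (fun k => entranceProb d x y k * ((1 + u) ^ k)⁻¹) (entranceGen d x y u) :=
  (Summable.of_norm_bounded
    (summable_geometric_of_lt_one (by positivity) (inv_lt_one_of_one_lt₀ hu))
    (norm_entranceGen_term_le x y u)).hasSum

lemma norm_entranceGen_le (hu : 1 < |1 + u|) (x y : Fin d → ℤ) :
    ‖entranceGen d x y u‖ ≤ (1 - |1 + u|⁻¹)⁻¹ :=
  tsum_of_norm_bounded
    (hasSum_geometric_of_lt_one (by positivity) (inv_lt_one_of_one_lt₀ hu))
    (norm_entranceGen_term_le x y u)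

lemma entranceGen_self (y : Fin d → ℤ) (u : ℝ) : entranceGen d y y u = 1 := by
  rw [entranceGen, tsum_eq_single 0 fun k hk => by rw [entranceProb_self_of_ne_zero y hk, zero_mul],
    entranceProb_self_zero, pow_zero, inv_one, mul_one]

lemma entranceGen_eq_hitGen (hu : 1 < |1 + u|) (hxy : x ≠ y) :
    entranceGen d x y u = hitGen d x y u := by
  rw [entranceGen, (hasSum_entranceGen hu x y).summable.tsum_eq_zero_add,
    entranceProb_zero_of_ne hxy, zero_mul, zero_add]
  simp only [entranceProb_eq_firstHitProb hxy, hitGen]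

lemma one_add_mul_hitGen (hu : 1 < |1 + u|) (x y : Fin d → ℤ) :
    (1 + u) * hitGen d x y u = stepAvg d (fun z => entranceGen d z y u) x := by
  have hu0 : 1 + u ≠ 0 := abs_pos.1 (one_pos.trans hu)
  have hterm (k : ℕ) : (1 + u) * (firstHitProb d x y (k + 1) * ((1 + u) ^ (k + 1))⁻¹) =
      stepAvg d (fun z => entranceProb d z y k * ((1 + u) ^ k)⁻¹) x := by
    simp only [← smul_eq_mul (_ : ℝ) ((1 + u) ^ k)⁻¹]
    rw [stepAvg_smul_const, ← firstHitProb_succ, smul_eq_mul]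
    field_simp
    ring
  rw [hitGen, ← tsum_mul_left]
  simp only [hterm]
  exact (hasSum_stepAvg (fun z => hasSum_entranceGen hu z y) x).tsum_eq

end Entrance

end CBRW

open CBRW in
theorem nu_eq_expected_discounted_hitting_general {E : Type*} [NormedAddCommGroup E]
    [NormedSpace ℝ E] {d : ℕ} {u : ℝ} (hu : 1 < |1 + u|) {y : Fin d → ℤ}
    {f : (Fin d → ℤ) → E} (hbdd : ∃ B, ∀ x, ‖f x‖ ≤ B)
    (hf : ∀ x ≠ y, (1 + u) • f x = stepAvg d f x) :
    ∀ x ≠ y, f x = hitGen d x y u • f y := by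
  obtain ⟨B, hB⟩ := hbdd
  let h : (Fin d → ℤ) → E := fun z => entranceGen d z y u • f y
  have hsub_bdd : ∀ x, ‖(f - h) x‖ ≤ B + (1 - |1 + u|⁻¹)⁻¹ * ‖f y‖ := fun x =>
    norm_sub_le_of_le (hB x) <| by
      rw [norm_smul]
      gcongr
      exact norm_entranceGen_le hu x y
  have hsub_zero : ∀ x ∈ ({y} : Set (Fin d → ℤ)), (f - h) x = 0 := by
    rintro _ rfl
    simp only [h, Pi.sub_apply, entranceGen_self, one_smul, sub_self]
  have hsub_eq : ∀ x ∉ ({y} : Set (Fin d → ℤ)),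
      (1 + u) • (f - h) x = stepAvg d (f - h) x := fun x (hx : x ≠ y) => by
    rw [stepAvg_sub, stepAvg_smul_const, ← one_add_mul_hitGen hu, ← hf x hx, Pi.sub_apply,
      smul_sub, ← entranceGen_eq_hitGen hu hx, mul_smul]
  have hfh : f = h := sub_eq_zero.1 (eq_zero_of_smul_eq_stepAvg hu ⟨_, hsub_bdd⟩ hsub_zero hsub_eq)
  intro x hx
  rw [← entranceGen_eq_hitGen hu hx]
  exact congrFun hfh x

open CBRW in
/-- If `ν` is bounded, nonnegative, satisfies the balance equation with parameter `ε > 0`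
and `ν 0 > 0`, then for all `x ≠ 0`,
`ν x = ν 0 · E_x[𝟙_{τ_0 < ∞} (1 + ε ν 0)^{-τ_0}]`. -/
theorem nu_eq_expected_discounted_hitting
    (d : ℕ) (hd : 1 ≤ d) (ε : ℝ) (hε : 0 < ε)
    (ν : (Fin d → ℤ) → ℝ) (hν0 : ∀ x, 0 ≤ ν x) (hbdd : ∃ B, ∀ x, ν x ≤ B)
    (hbal : BalanceEq d ε ν) (hpos : 0 < ν 0) :
    ∀ x : Fin d → ℤ, x ≠ 0 → ν x = ν 0 * hitGen d x 0 (ε * ν 0) := by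
  have hu : 1 < |1 + ε * ν 0| := lt_abs.2 (.inl (lt_add_of_pos_right 1 (mul_pos hε hpos)))
  have hnorm : ∃ B, ∀ x, ‖ν x‖ ≤ B := hbdd.imp fun B hB x =>
    (Real.norm_of_nonneg (hν0 x)).trans_le (hB x)
  intro x hx
  rw [mul_comm]
  exact nu_eq_expected_discounted_hitting_general hu hnorm (balanceEq_iff_stepAvg.1 hbal) x hx
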